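/- arXiv:2509.11001 — 3 statements merged into one kernel-verified Lean document; each statement's English description precedes it below -/
import Mathlib

section
/- Let n be a natural number with prime factorisation n = p_1^{α_1} ⋯ p_t^{α_t} (the p_i distinct primes). Then every skew brace of order n is λ-homomorphic if and only if α_i ≤ 2 for every i and p_i does not divide p_j^{α_j} − 1 for all i ≠ j. -/
/-- A skew (left) brace: a set with two group structures `(A,+)` and `(A,∘)`
(the latter written multiplicatively) satisfying
`a ∘ (b + c) = a ∘ b - a + a ∘ c`. -/
class SkewBrace (A : Type*) extends AddGroup A, Group A where
  skew_left_distrib : ∀ a b c : A, a * (b + c) = a * b - a + a * c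

theorem aux_aut_trivial {P : Type*} [Group P] [Finite P] {p q a : ℕ} (hp : p.Prime) (hq : q.Prime)
    (hcard : Nat.card P = p ^ a) (ha : a ≤ 2) (hpq : q ≠ p) (hnd : ¬ q ∣ p ^ a - 1)
    (σ : MulAut P) (hσ : σ ^ q = 1) : σ = 1 := by
  have := Fact.mk hq
  have hG : IsPGroup q (Subgroup.zpowers σ) := by
    rintro ⟨x, hx⟩
    obtain ⟨k, rfl⟩ := Subgroup.mem_zpowers_iff.1 hx
    refine ⟨1, Subtype.ext ?_⟩
    rw [pow_one, Subgroup.coe_pow, Subgroup.coe_one]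
    rw [← zpow_natCast, ← zpow_mul, mul_comm, zpow_mul, zpow_natCast, hσ, one_zpow]
  have h1 := hG.card_modEq_card_fixedPoints P
  let F : Subgroup P := MonoidHom.eqLocus σ.toMonoidHom (MonoidHom.id P)
  have hF : MulAction.fixedPoints (Subgroup.zpowers σ) P = (F : Set P) := by
    ext x
    constructor
    · intro h
      exact h ⟨σ, Subgroup.mem_zpowers σ⟩
    · rintro h ⟨y, hy⟩
      have h0 : σ ∈ MulAction.stabilizer (MulAut P) x := h
      have : Subgroup.zpowers σ ≤ MulAction.stabilizer (MulAut P) x := by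
        rwa [Subgroup.zpowers_le]
      exact this hy
  rw [hF, hcard] at h1
  have hd : Nat.card F ∣ p ^ a := hcard ▸ F.card_subgroup_dvd_card
  obtain ⟨k, hk, hk'⟩ := (Nat.dvd_prime_pow hp).1 hd
  have h2 : p ^ a ≡ p ^ k [MOD q] := by rw [← hk']; exact h1
  have hpk : ∀ k, 1 ≤ p ^ k := fun k => Nat.one_le_pow _ _ hp.pos
  have hka : k = a := by
    by_contra hne
    have h3 : q ∣ p ^ a - p ^ k := (Nat.modEq_iff_dvd' (Nat.pow_le_pow_right hp.pos hk)).1 h2.symm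
    rcases Nat.eq_zero_or_pos k with h0 | h0
    · subst h0; simp at h3; exact hnd h3
    · have e1 : k = 1 := by omega
      have e2 : a = 2 := by omega
      subst e1; subst e2
      have : p ^ 2 - p ^ 1 = p * (p - 1) := by rw [Nat.mul_sub]; ring_nf
      rw [this] at h3
      rcases hq.dvd_mul.1 h3 with h4 | h4
      · exact hpq ((Nat.prime_dvd_prime_iff_eq hq hp).1 h4)
      · apply hnd
        have : p ^ 2 - 1 = (p + 1) * (p - 1) := by
          have := Nat.sq_sub_sq p 1
          simpa using this
        rw [this]
        exact h4.mul_left _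
  have hT : F = ⊤ := by
    apply Subgroup.eq_top_of_card_eq
    rw [hk', hka, hcard]
  ext x
  have : x ∈ F := by rw [hT]; trivial
  exact this

theorem aux_comm {G : Type*} [Group G] [Finite G] (n : ℕ) (hn : Nat.card G = n)
    (h1 : ∀ p ∈ n.primeFactors, n.factorization p ≤ 2)
    (h2 : ∀ p ∈ n.primeFactors, ∀ q ∈ n.primeFactors, p ≠ q →
        ¬ p ∣ q ^ n.factorization q - 1) (a b : G) : a * b = b * a := by
  have hn0 : n ≠ 0 := by rw [← hn]; exact Nat.card_pos.ne'
  have key : ∀ p ∈ n.primeFactors, ¬ p ∣ orderOf (a * b * a⁻¹ * b⁻¹) := by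
    intro p hpn
    have hp := Nat.prime_of_mem_primeFactors hpn
    have := Fact.mk hp
    obtain ⟨P⟩ : Nonempty (Sylow p G) := inferInstance
    have hPc : Nat.card P = p ^ n.factorization p := hn ▸ P.card_eq_multiplicity
    have hle := h1 p hpn
    have hcomm : IsMulCommutative P := by
      have : n.factorization p = 0 ∨ n.factorization p = 1 ∨ n.factorization p = 2 := by omega
      rcases this with h | h | h
      · rw [h, pow_zero] at hPc
        have := (Nat.card_eq_one_iff_unique.1 hPc).1
        exact ⟨⟨fun a b => Subsingleton.elim _ _⟩⟩
      · rw [h, pow_one] at hPc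
        have := isCyclic_of_prime_card hPc
        exact ⟨⟨fun a b => IsCyclic.commGroup.mul_comm a b⟩⟩
      · rw [h] at hPc
        exact IsPGroup.isMulCommutative_of_card_eq_prime_sq hPc
    have hNC : Subgroup.normalizer (P : Set G) ≤ Subgroup.centralizer (P : Set G) := by
      have hker := (P : Subgroup G).normalizerMonoidHom_ker
      have hidx : Nat.card (P : Subgroup G).normalizerMonoidHom.range =
          (Subgroup.centralizer (P : Set G)).relIndex (Subgroup.normalizer (P : Set G)) := by
        rw [← Subgroup.index_ker, hker]; rfl
      rw [← Subgroup.relIndex_eq_one, ← hidx]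
      by_contra hne
      obtain ⟨q, hq, hqd⟩ := Nat.exists_prime_and_dvd hne
      have := Fact.mk hq
      obtain ⟨σ, hσ⟩ := exists_prime_orderOf_dvd_card' q hqd
      have hqn : q ∈ n.primeFactors := by
        refine Nat.mem_primeFactors.2 ⟨hq, ?_, hn0⟩
        rw [← hn]
        exact (hqd.trans (Subgroup.card_range_dvd _)).trans (Subgroup.card_subgroup_dvd_card _)
      have hqp : q ≠ p := by
        rintro rfl
        apply P.not_dvd_index
        rw [hidx] at hqd
        refine hqd.trans ?_
        refine (Subgroup.relIndex_dvd_of_le_left _ (P : Subgroup G).le_centralizer).trans ?_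
        exact Subgroup.relIndex_dvd_index_of_le (P : Subgroup G).le_normalizer
      have h3 := aux_aut_trivial hp hq hPc hle hqp (h2 q hqn p hpn hqp) σ.1 (by
        rw [← hσ, ← Subgroup.orderOf_coe, pow_orderOf_eq_one])
      have : σ = 1 := Subtype.ext h3
      rw [this, orderOf_one] at hσ
      exact hq.one_lt.ne hσ
    intro hdvd
    refine MonoidHom.not_dvd_card_ker_transferSylow P hNC (hdvd.trans ?_)
    have hmem : a * b * a⁻¹ * b⁻¹ ∈ (MonoidHom.transferSylow P hNC).ker := by
      rw [MonoidHom.mem_ker]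
      simp only [map_mul, map_inv]
      rw [mul_comm' (MonoidHom.transferSylow P hNC a)]
      group
    have := orderOf_dvd_natCard (⟨_, hmem⟩ : (MonoidHom.transferSylow P hNC).ker)
    rwa [← Subgroup.orderOf_coe] at this
  have h3 : orderOf (a * b * a⁻¹ * b⁻¹) = 1 := by
    by_contra hne
    obtain ⟨q, hq, hqd⟩ := Nat.exists_prime_and_dvd hne
    refine key q (Nat.mem_primeFactors.2 ⟨hq, ?_, hn0⟩) hqd
    rw [← hn]
    exact hqd.trans (orderOf_dvd_natCard _)
  rw [orderOf_eq_one_iff] at h3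
  rwa [mul_inv_eq_one, mul_inv_eq_iff_eq_mul] at h3

theorem aux_chain {R : Type*} [NonUnitalCommRing R] [Finite R] (n : ℕ) (hn : Nat.card R = n)
    (h1 : ∀ p ∈ n.primeFactors, n.factorization p ≤ 2)
    (hqr : ∀ w z : R, z * w = z → z = 0) (a b c : R) : a * b * c = 0 := by
  have hn0 : n ≠ 0 := by rw [← hn]; exact Nat.card_pos.ne'
  let S : R → AddSubgroup R := fun z =>
    (AddSubgroup.zmultiples z) ⊔ (AddMonoidHom.mulLeft z).range
  have hmem : ∀ z x, x ∈ S z ↔ ∃ (k : ℤ) (r : R), k • z + z * r = x := by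
    intro z x
    simp only [S, AddSubgroup.mem_sup, AddSubgroup.mem_zmultiples_iff, AddMonoidHom.mem_range,
      AddMonoidHom.coe_mulLeft]
    constructor
    · rintro ⟨_, ⟨k, rfl⟩, _, ⟨r, rfl⟩, h⟩
      exact ⟨k, r, h⟩
    · rintro ⟨k, r, h⟩
      exact ⟨_, ⟨k, rfl⟩, _, ⟨r, rfl⟩, h⟩
  have hself : ∀ z, z ∈ S z := fun z => (hmem z z).2 ⟨1, 0, by simp⟩
  have hle : ∀ z w, S (z * w) ≤ S z := by
    intro z w x hx
    obtain ⟨k, r, rfl⟩ := (hmem _ _).1 hx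
    refine (hmem _ _).2 ⟨0, k • w + w * r, ?_⟩
    rw [mul_add, mul_smul_comm, zero_smul, zero_add, mul_assoc]
  have hlt : ∀ z w, z ≠ 0 → S (z * w) < S z := by
    intro z w hz
    refine lt_of_le_of_ne (hle z w) fun h => hz ?_
    have hz' := hself z
    rw [← h] at hz'
    obtain ⟨k, r, h⟩ := (hmem _ _).1 hz'
    refine hqr (k • w + w * r) z ?_
    rw [mul_add, mul_smul_comm, ← mul_assoc, h]
  have key : ∀ p ∈ n.primeFactors, ¬ p ∣ addOrderOf (a * b * c) := by
    intro p hpn hdvd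
    have hp := Nat.prime_of_mem_primeFactors hpn
    set m := n / p ^ n.factorization p with hm
    have hmn : p ^ n.factorization p * m = n := Nat.ordProj_mul_ordCompl_eq_self n p
    have hpm : ¬ p ∣ m := Nat.not_dvd_ordCompl hp hn0
    set a' := m • a with ha'
    have hne : a' * b * c ≠ 0 := by
      rw [ha', smul_mul_assoc, smul_mul_assoc]
      intro h
      exact hpm (hdvd.trans (addOrderOf_dvd_of_nsmul_eq_zero h))
    have hne2 : a' * b ≠ 0 := fun h => hne (by rw [h, zero_mul])
    have hne1 : a' ≠ 0 := fun h => hne2 (by rw [h, zero_mul])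
    have l1 := hlt _ c hne2
    have l2 := hlt _ b hne1
    have hcard : ∃ k, Nat.card (S a') = p ^ k := by
      refine ⟨_, Nat.eq_prime_pow_of_unique_prime_dvd Nat.card_pos.ne' ?_⟩
      intro q hq hqd
      have := Fact.mk hq
      obtain ⟨x, hx⟩ := exists_prime_addOrderOf_dvd_card' q hqd
      have hx0 : (p ^ n.factorization p) • x = 0 := by
        apply Subtype.ext
        obtain ⟨k, r, hh⟩ := (hmem _ _).1 x.2
        have e : (p ^ n.factorization p) • a' = 0 := by
          rw [ha', ← mul_smul, hmn, ← hn]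
          exact card_nsmul_eq_zero'
        rw [AddSubgroup.coe_nsmul, ← hh, smul_add, ← smul_mul_assoc, e, smul_comm, e]
        simp
      have := addOrderOf_dvd_of_nsmul_eq_zero hx0
      rw [hx] at this
      exact (Nat.prime_dvd_prime_iff_eq hq hp).1 (hq.dvd_of_dvd_pow this)
    obtain ⟨k, hk⟩ := hcard
    have c2 : Nat.card (S (a' * b)) ∣ Nat.card (S a') := AddSubgroup.card_dvd_of_le l2.le
    have c1 : Nat.card (S (a' * b * c)) ∣ Nat.card (S (a' * b)) := AddSubgroup.card_dvd_of_le l1.le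
    have strict : ∀ H K : AddSubgroup R, H < K → Nat.card H < Nat.card K := by
      intro H K h
      refine lt_of_le_of_ne (AddSubgroup.card_le_of_le h.le) fun e => h.ne ?_
      exact AddSubgroup.eq_of_le_of_card_ge h.le e.ge
    have s1 := strict _ _ l1
    have s2 := strict _ _ l2
    have s0 : 1 < Nat.card (S (a' * b * c)) := by
      rw [AddSubgroup.one_lt_card_iff_ne_bot]
      intro h
      have := hself (a' * b * c)
      rw [h] at this
      exact hne this
    rw [hk] at c2 s2
    obtain ⟨j, hj, hj'⟩ := (Nat.dvd_prime_pow hp).1 c2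
    rw [hj'] at c1 s1 s2
    obtain ⟨i, hi, hi'⟩ := (Nat.dvd_prime_pow hp).1 c1
    rw [hi'] at s1 s0
    have i1 := (Nat.pow_lt_pow_iff_right hp.one_lt).1 s1
    have i2 := (Nat.pow_lt_pow_iff_right hp.one_lt).1 s2
    have i0 : i ≠ 0 := by rintro rfl; simp at s0
    have hkn : p ^ k ∣ n := by rw [← hk, ← hn]; exact AddSubgroup.card_addSubgroup_dvd_card _
    have := (hp.pow_dvd_iff_le_factorization hn0).1 hkn
    have := h1 p hpn
    omega
  have h3 : addOrderOf (a * b * c) = 1 := by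
    by_contra hne
    obtain ⟨q, hq, hqd⟩ := Nat.exists_prime_and_dvd hne
    refine key q (Nat.mem_primeFactors.2 ⟨hq, ?_, hn0⟩) hqd
    rw [← hn]
    exact hqd.trans (addOrderOf_dvd_natCard _)
  rwa [AddMonoid.addOrderOf_eq_one_iff] at h3

theorem aux_backward (n : ℕ) 
    (h1 : ∀ p ∈ n.primeFactors, n.factorization p ≤ 2)
    (h2 : ∀ p ∈ n.primeFactors, ∀ q ∈ n.primeFactors, p ≠ q →
        ¬ p ∣ q ^ n.factorization q - 1)
    (A : Type) [Fintype A] [SkewBrace A] (hA : Fintype.card A = n) (a b x : A) :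
    -(a + b) + (a + b) * x = -a + a * (-b + b * x) := by
  have hA' : Nat.card A = n := by rw [Nat.card_eq_fintype_card, hA]
  have hadd : ∀ a b : A, a + b = b + a := fun a b =>
    aux_comm (G := Multiplicative A) n hA' h1 h2 (Multiplicative.ofAdd a) (Multiplicative.ofAdd b)
  have hmul : ∀ a b : A, a * b = b * a := aux_comm n hA' h1 h2
  let I1 : AddCommGroup A := { (inferInstance : AddGroup A) with add_comm := hadd }
  have hd : ∀ a b c : A, a * (b + c) = a * b - a + a * c := SkewBrace.skew_left_distrib
  have h0 : ∀ a : A, a * 0 = a := by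
    intro a
    have := hd a 0 0
    rw [add_zero] at this
    have h : a * 0 - a = 0 := by
      have h' : a * 0 - a + a * 0 = 0 + a * 0 := by rw [zero_add]; exact this.symm
      exact add_right_cancel h'
    exact sub_eq_zero.1 h
  have hneg : ∀ a b : A, a * (-b) = a + a - a * b := by
    intro a b
    have := hd a b (-b)
    rw [add_neg_cancel, h0] at this
    have h' : a * -b = a - (a * b - a) := by rw [eq_sub_iff_add_eq, add_comm, ← this]
    rw [h']; abel
  have hd' : ∀ a b c : A, (a + b) * c = a * c - c + b * c := by
    intro a b c
    rw [hmul, hd, hmul c a, hmul c b]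
  have hq : ∀ w z : A, z * w - z - w = z → z = 0 := by
    intro w z h
    have h' : z * w = z + z + w := by
      rw [sub_eq_iff_eq_add, sub_eq_iff_eq_add] at h
      rw [h]; abel
    have h'' : z * (-w) = 0 + (-w) := by rw [hneg, h']; abel
    rw [zero_add] at h''
    have : z = 1 := by simpa using h''
    rw [this, ← h0 1, one_mul]
  have hz : ∀ a b c : A, (a * b - a - b) * c - (a * b - a - b) - c = 0 := by
    let R : NonUnitalCommRing A :=
      { I1 with
        mul := fun a b => a * b - a - b
        left_distrib := by
          intro a b c
          change a * (b + c) - a - (b + c) = (a * b - a - b) + (a * c - a - c)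
          rw [hd]; abel
        right_distrib := by
          intro a b c
          change (a + b) * c - (a + b) - c = (a * c - a - c) + (b * c - b - c)
          rw [hd']; abel
        zero_mul := by
          intro a
          change 0 * a - 0 - a = 0
          rw [hmul, h0]; abel
        mul_zero := by
          intro a
          change a * 0 - a - 0 = 0
          rw [h0]; abel
        mul_assoc := by
          intro a b c
          change (a * b - a - b) * c - (a * b - a - b) - c = a * (b * c - b - c) - a - (b * c - b - c)
          simp only [sub_eq_add_neg, hd, hd', hneg, hmul (-_) c, mul_assoc]
          rw [hmul c a, hmul c b]
          abel
        mul_comm := by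
          intro a b
          change a * b - a - b = b * a - b - a
          rw [hmul]; abel }
    exact @aux_chain A R inferInstance n hA' h1 hq
  have key := hz b x a
  rw [hmul _ a] at key
  have e : a * (-b + b * x) = a * (-b + (b * x - b - x + b + x)) := by congr 2; abel
  have : a * (b * x - b - x) = (b * x - b - x) + a := by
    rw [sub_sub, sub_eq_zero] at key; exact key
  rw [e]
  simp only [hd, hd', hneg, this]
  abel

instance prodSkewBrace (B C : Type) [SkewBrace B] [SkewBrace C] : SkewBrace (B × C) :=
  { (inferInstance : AddGroup (B × C)), (inferInstance : Group (B × C)) with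
    skew_left_distrib := fun _ _ _ =>
      Prod.ext (SkewBrace.skew_left_distrib _ _ _) (SkewBrace.skew_left_distrib _ _ _) }

/-- The trivial brace on the cyclic group. -/
def TrivB (m : ℕ) : Type := ZMod m

instance (m : ℕ) : AddCommGroup (TrivB m) := inferInstanceAs (AddCommGroup (ZMod m))

instance (m : ℕ) : Group (TrivB m) := inferInstanceAs (Group (Multiplicative (ZMod m)))

theorem TrivB.mul_def {m : ℕ} (a b : TrivB m) : a * b = a + b := rfl

instance (m : ℕ) : SkewBrace (TrivB m) :=
  { (inferInstance : AddCommGroup (TrivB m)), (inferInstance : Group (TrivB m)) with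
    skew_left_distrib := fun a b c => by
      change a + (b + c) = (a + b) - a + (a + c)
      abel }

theorem aux_prod (n : ℕ) (hn : 0 < n)
    (H : ∀ (A : Type) [Fintype A] [SkewBrace A], Fintype.card A = n →
      (∀ a b x : A, -(a + b) + (a + b) * x = -a + a * (-b + b * x)))
    (B : Type) [Finite B] [SkewBrace B] (hB : Nat.card B ∣ n) (a b x : B) :
    -(a + b) + (a + b) * x = -a + a * (-b + b * x) := by
  obtain ⟨m, hm⟩ := hB
  have hm0 : m ≠ 0 := by rintro rfl; omega
  have := NeZero.mk hm0
  have : Finite (TrivB m) := inferInstanceAs (Finite (ZMod m))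
  have := Fintype.ofFinite (B × TrivB m)
  have h := H (B × TrivB m) (by
    rw [← Nat.card_eq_fintype_card, Nat.card_prod, hm]
    congr 1
    exact Nat.card_zmod m) (a, 0) (b, 0) (x, 0)
  exact congrArg Prod.fst h

/-- The almost trivial skew brace of a group. -/
def OpB (G : Type) : Type := G

instance (G : Type) [Group G] : AddGroup (OpB G) := inferInstanceAs (AddGroup (Additive G))

instance (G : Type) [Group G] : Group (OpB G) where
  mul a b := (b + a : OpB G)
  one := (0 : OpB G)
  inv a := (-a : OpB G)
  mul_assoc a b c := (add_assoc (G := OpB G) c b a).symm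
  one_mul a := add_zero (M := OpB G) a
  mul_one a := zero_add (M := OpB G) a
  inv_mul_cancel a := add_neg_cancel (G := OpB G) a

instance (G : Type) [Group G] : SkewBrace (OpB G) :=
  { (inferInstance : AddGroup (OpB G)), (inferInstance : Group (OpB G)) with
    skew_left_distrib := fun a b c => by
      change (b + c) + a = (b + a) - a + (c + a)
      rw [add_sub_cancel_right, add_assoc] }

theorem aux_op (n : ℕ) (hn : 0 < n)
    (H : ∀ (A : Type) [Fintype A] [SkewBrace A], Fintype.card A = n →
      (∀ a b x : A, -(a + b) + (a + b) * x = -a + a * (-b + b * x)))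
    (G : Type) [Finite G] [Group G] (hB : Nat.card G ∣ n) (a b x : G) :
    (a * b)⁻¹ * (x * (a * b)) = a⁻¹ * ((b⁻¹ * (x * b)) * a) := by
  have : Finite (OpB G) := inferInstanceAs (Finite G)
  exact aux_prod n hn H (OpB G) hB a b x

/-- The radical ring `x F_p[x] / x^4`. -/
def Rad (p : ℕ) : Type := ZMod p × ZMod p × ZMod p

instance (p : ℕ) : AddCommGroup (Rad p) :=
  inferInstanceAs (AddCommGroup (ZMod p × ZMod p × ZMod p))

/-- The circle operation on the radical ring. -/
def Rad.circ {p : ℕ} (a b : Rad p) : Rad p :=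
  (a.1 + b.1, a.2.1 + b.2.1 + a.1 * b.1, a.2.2 + b.2.2 + a.1 * b.2.1 + a.2.1 * b.1)

theorem Rad.ext {p : ℕ} {a b : Rad p} (h1 : a.1 = b.1) (h2 : a.2.1 = b.2.1) (h3 : a.2.2 = b.2.2) :
    a = b := Prod.ext h1 (Prod.ext h2 h3)

instance (p : ℕ) : Group (Rad p) where
  mul := Rad.circ
  one := (0 : Rad p)
  inv a := ((-a.1, -a.2.1 + a.1 ^ 2, -a.2.2 + 2 * a.1 * a.2.1 - a.1 ^ 3) : ZMod p × ZMod p × ZMod p)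
  mul_assoc a b c := by
    change Rad.circ (Rad.circ a b) c = Rad.circ a (Rad.circ b c)
    apply Rad.ext <;> simp only [Rad.circ] <;> ring
  one_mul a := by
    change Rad.circ ((0, 0, 0) : ZMod p × ZMod p × ZMod p) a = a
    apply Rad.ext <;> simp only [Rad.circ] <;> ring
  mul_one a := by
    change Rad.circ a ((0, 0, 0) : ZMod p × ZMod p × ZMod p) = a
    apply Rad.ext <;> simp only [Rad.circ] <;> ring
  inv_mul_cancel a := by
    change Rad.circ ((-a.1, -a.2.1 + a.1 ^ 2, -a.2.2 + 2 * a.1 * a.2.1 - a.1 ^ 3) :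
      ZMod p × ZMod p × ZMod p) a = ((0, 0, 0) : ZMod p × ZMod p × ZMod p)
    apply Rad.ext <;> simp only [Rad.circ] <;> ring

theorem Rad.add_fst {p : ℕ} (a b : Rad p) : (a + b).1 = a.1 + b.1 := rfl
theorem Rad.add_snd {p : ℕ} (a b : Rad p) : (a + b).2.1 = a.2.1 + b.2.1 := rfl
theorem Rad.add_trd {p : ℕ} (a b : Rad p) : (a + b).2.2 = a.2.2 + b.2.2 := rfl
theorem Rad.neg_fst {p : ℕ} (a : Rad p) : (-a).1 = -a.1 := rfl
theorem Rad.neg_snd {p : ℕ} (a : Rad p) : (-a).2.1 = -a.2.1 := rfl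
theorem Rad.neg_trd {p : ℕ} (a : Rad p) : (-a).2.2 = -a.2.2 := rfl
theorem Rad.mul_fst {p : ℕ} (a b : Rad p) : (a * b).1 = a.1 + b.1 := rfl
theorem Rad.mul_snd {p : ℕ} (a b : Rad p) : (a * b).2.1 = a.2.1 + b.2.1 + a.1 * b.1 := rfl
theorem Rad.mul_trd {p : ℕ} (a b : Rad p) :
    (a * b).2.2 = a.2.2 + b.2.2 + a.1 * b.2.1 + a.2.1 * b.1 := rfl

instance (p : ℕ) : SkewBrace (Rad p) :=
  { (inferInstance : AddCommGroup (Rad p)), (inferInstance : Group (Rad p)) with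
    skew_left_distrib := fun a b c => by
      rw [sub_eq_add_neg]
      apply Rad.ext <;>
        simp only [Rad.add_fst, Rad.add_snd, Rad.add_trd, Rad.neg_fst, Rad.neg_snd, Rad.neg_trd,
          Rad.mul_fst, Rad.mul_snd, Rad.mul_trd] <;> ring }

theorem aux_forward1 (n : ℕ) (hn : 0 < n)
    (H : ∀ (A : Type) [Fintype A] [SkewBrace A], Fintype.card A = n →
      (∀ a b x : A, -(a + b) + (a + b) * x = -a + a * (-b + b * x)))
    (p : ℕ) (hp : p.Prime) : n.factorization p ≤ 2 := by
  by_contra hlt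
  have hd : p ^ 3 ∣ n := (hp.pow_dvd_iff_le_factorization hn.ne').2 (by omega)
  have := Fact.mk hp
  have : Finite (Rad p) := inferInstanceAs (Finite (ZMod p × ZMod p × ZMod p))
  let e : Rad p := ((1, 0, 0) : ZMod p × ZMod p × ZMod p)
  have h := aux_prod n hn H (Rad p) (by
    have : Nat.card (Rad p) = Nat.card (ZMod p × ZMod p × ZMod p) := rfl
    rw [this, Nat.card_prod, Nat.card_prod, Nat.card_zmod]
    convert hd using 1
    ring) e e e
  have h3 := congrArg (fun z : Rad p => z.2.2) h
  have e1 : e.1 = 1 := rfl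
  have e2 : e.2.1 = 0 := rfl
  have e3 : e.2.2 = 0 := rfl
  simp [Rad.add_fst, Rad.add_snd, Rad.add_trd, Rad.neg_fst, Rad.neg_snd, Rad.neg_trd,
          Rad.mul_fst, Rad.mul_snd, Rad.mul_trd, e1, e2, e3] at h3

theorem aux_forward2 (n : ℕ) (hn : 0 < n)
    (H : ∀ (A : Type) [Fintype A] [SkewBrace A], Fintype.card A = n →
      (∀ a b x : A, -(a + b) + (a + b) * x = -a + a * (-b + b * x)))
    (p q : ℕ) (hp : p.Prime) (hq : q.Prime) (hpn : p ∣ n) (hqn : q ∣ n) (hpq : p ≠ q) :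
    ¬ p ∣ q ^ n.factorization q - 1 := by
  intro hd
  have := Fact.mk hp
  have := Fact.mk hq
  have hα : n.factorization q ≠ 0 := (hq.factorization_pos_of_dvd hn.ne' hqn).ne'
  set α := n.factorization q with hαd
  let F := GaloisField q α
  have hF : Nat.card F = q ^ α := GaloisField.card q α hα
  have : Finite F := Nat.finite_of_card_ne_zero (by rw [hF]; exact pow_ne_zero _ hq.ne_zero)
  have hU : Nat.card Fˣ = q ^ α - 1 := by rw [Nat.card_units, hF]
  obtain ⟨u, hu⟩ := exists_prime_orderOf_dvd_card' (G := Fˣ) p (by rw [hU]; exact hd)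
  let K := Subgroup.zpowers u
  let φ : K →* MulAut (Multiplicative F) :=
    (MulAutMultiplicative F).symm.toMonoidHom.comp
      ((DistribMulAction.toAddAut Fˣ F).comp K.subtype)
  have hφ : ∀ (k : K) (x : F), φ k (Multiplicative.ofAdd x) = Multiplicative.ofAdd ((k : Fˣ) * x) :=
    fun k x => rfl
  let e : Multiplicative F ⋊[φ] K ≃ Multiplicative F × K := SemidirectProduct.equivProd
  have hfin : Finite (Multiplicative F ⋊[φ] K) := Finite.of_equiv _ e.symm
  have hcard : Nat.card (Multiplicative F ⋊[φ] K) = q ^ α * p := by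
    rw [SemidirectProduct.card, Nat.card_zpowers, hu, ← hF]; rfl
  have hdiv : q ^ α * p ∣ n := by
    apply Nat.Coprime.mul_dvd_of_dvd_of_dvd
    · exact Nat.Coprime.pow_left _ ((Nat.coprime_primes hq hp).2 hpq.symm)
    · exact Nat.ordProj_dvd n q
    · exact hpn
  let k : K := ⟨u, Subgroup.mem_zpowers u⟩
  have h := aux_op n hn H (Multiplicative F ⋊[φ] K) (hcard ▸ hdiv)
    (SemidirectProduct.inl (Multiplicative.ofAdd (1 : F))) (SemidirectProduct.inr k)
    (SemidirectProduct.inr k)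
  have h2 := congrArg (fun z => SemidirectProduct.inr k * z) h
  have h' := congrArg (fun z => Multiplicative.toAdd (SemidirectProduct.left z)) h2
  simp only [mul_inv_rev, SemidirectProduct.mul_left, SemidirectProduct.mul_right,
    SemidirectProduct.inv_left, SemidirectProduct.inv_right, SemidirectProduct.left_inl,
    SemidirectProduct.left_inr, SemidirectProduct.right_inl, SemidirectProduct.right_inr,
    map_one, map_mul, inv_one, one_mul, mul_one, MulAut.one_apply, ← ofAdd_neg, hφ, ← ofAdd_add,
    toAdd_ofAdd, map_inv, MulAut.apply_inv_self, mul_inv_cancel] at h'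
  rw [inv_mul_cancel_left, hφ, hφ, ← ofAdd_add, toAdd_ofAdd] at h'
  have h3 : ((u : F) - 1) * (u - 1) = 0 := by
    have hk : ((k : Fˣ) : F) = u := rfl
    rw [hk] at h'
    linear_combination -h'
  have h4 : (u : F) = 1 := sub_eq_zero.1 (mul_self_eq_zero.1 h3)
  have h5 : u = 1 := Units.ext h4
  rw [h5, orderOf_one] at hu
  exact hp.one_lt.ne hu

/-- Every skew brace of order `n` is λ-homomorphic (`λ_{a+b} = λ_a λ_b`,
where `λ_a(x) = -a + a ∘ x`) iff the prime factorisation of `n` is cube-free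
and `p ∤ q^{α_q} - 1` for distinct primes `p, q` dividing `n`. -/
theorem every_skewBrace_is_lambda_homomorphic_iff (n : ℕ) (hn : 0 < n) :
    (∀ (A : Type) [Fintype A] [SkewBrace A], Fintype.card A = n →
      (∀ a b x : A, -(a + b) + (a + b) * x = -a + a * (-b + b * x))) ↔
    ((∀ p ∈ n.primeFactors, n.factorization p ≤ 2) ∧
      (∀ p ∈ n.primeFactors, ∀ q ∈ n.primeFactors, p ≠ q →
        ¬ p ∣ q ^ n.factorization q - 1)) := by
  constructor
  · intro H
    refine ⟨fun p hp => aux_forward1 n hn H p (Nat.prime_of_mem_primeFactors hp), ?_⟩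
    intro p hp q hq hpq
    exact aux_forward2 n hn H p q (Nat.prime_of_mem_primeFactors hp)
      (Nat.prime_of_mem_primeFactors hq) (Nat.dvd_of_mem_primeFactors hp)
      (Nat.dvd_of_mem_primeFactors hq) hpq
  · rintro ⟨h1, h2⟩ A _ _ hA a b x
    exact aux_backward n h1 h2 A hA a b x
end

section
/- Let n be a natural number with prime factorisation n = p_1^{α_1} ⋯ p_t^{α_t} (the p_i distinct primes). Then every skew brace of order n is right-nilpotent if and only if α_i ≤ 2 for every i and p_i does not divide p_j^{α_j} − 1 for all i ≠ j. -/
/-- The right series of a skew brace: `A^{(1)} = A` (index `0` here) and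
`A^{(m+1)} = A^{(m)} ∗ A`, the subgroup of `(A,+)` generated by the star
products `a ∗ b = -a + a ∘ b - b` with `a ∈ A^{(m)}`, `b ∈ A`. -/
def rightSeries (A : Type*) [SkewBrace A] : ℕ → AddSubgroup A
  | 0 => ⊤
  | m + 1 => AddSubgroup.closure
      {x : A | ∃ a ∈ rightSeries A m, ∃ b : A, x = -a + a * b - b}

/-- A skew brace is right-nilpotent if `A^{(m)} = {0}` for some `m`. -/
def IsRightNilpotent (A : Type*) [SkewBrace A] : Prop :=
  ∃ m : ℕ, rightSeries A m = ⊥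



theorem trivial_action_aux {R P : Type*} [Group R] [Group P] [Finite P] {r p k : ℕ}
    [Fact r.Prime] [hp : Fact p.Prime] (hR : IsPGroup r R) (hk : k ≤ 2) (hP : Nat.card P = p ^ k)
    (hr : ¬ r ∣ p ^ k - 1) (hne : r ≠ p) (φ : R →* MulAut P) (g : R) (x : P) : φ g x = x := by
  let _ : MulDistribMulAction R P := MulDistribMulAction.compHom P φ
  have h1 := hR.card_modEq_card_fixedPoints P
  have h2 : Nat.card (FixedPoints.subgroup R P) ∣ p ^ k := hP ▸ Subgroup.card_subgroup_dvd_card _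
  have h3 : Nat.card (MulAction.fixedPoints R P) = Nat.card (FixedPoints.subgroup R P) := rfl
  rw [h3, hP] at h1
  have hpos : 0 < p := hp.out.pos
  suffices h : FixedPoints.subgroup R P = ⊤ by
    have : x ∈ FixedPoints.subgroup R P := by rw [h]; trivial
    exact this g
  obtain ⟨j, hj, hj'⟩ := (Nat.dvd_prime_pow hp.out).1 h2
  rw [hj'] at h1
  apply Subgroup.eq_top_of_card_eq
  rw [hj', hP]
  have h4 : r ∣ p ^ k - p ^ j :=
    (Nat.modEq_iff_dvd' (Nat.pow_le_pow_right hpos hj)).1 h1.symm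
  interval_cases k <;> interval_cases j <;> simp_all
  exfalso
  apply hr
  have e1 : p ^ 2 - p = p * (p - 1) := by rw [pow_two, Nat.mul_sub, mul_one]
  have e2 : p ^ 2 - 1 = (p + 1) * (p - 1) := by simpa using Nat.sq_sub_sq p 1
  rw [e1] at h4
  rw [e2]
  have hrp : r.Prime := Fact.out
  rcases hrp.dvd_mul.1 h4 with h | h
  · exact absurd ((Nat.prime_dvd_prime_iff_eq hrp hp.out).1 h) hne
  · exact h.mul_left _

open scoped commutatorElement in
theorem comm_of_cond {G : Type*} [Group G] [Finite G] {n : ℕ} (hn : Nat.card G = n)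
    (h1 : ∀ p ∈ n.primeFactors, n.factorization p ≤ 2)
    (h2 : ∀ p ∈ n.primeFactors, ∀ q ∈ n.primeFactors, p ≠ q →
        ¬ p ∣ q ^ n.factorization q - 1) (a b : G) : a * b = b * a := by
  have hn0 : n ≠ 0 := hn ▸ Nat.card_pos.ne'
  have key : ∀ p ∈ n.primeFactors, ∃ K : Subgroup G, ¬ p ∣ Nat.card K ∧ ⁅a, b⁆ ∈ K := by
    intro p hp
    have : Fact p.Prime := ⟨Nat.prime_of_mem_primeFactors hp⟩
    obtain ⟨P⟩ : Nonempty (Sylow p G) := inferInstance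
    have hcP : Nat.card P = p ^ n.factorization p := by rw [P.card_eq_multiplicity, hn]
    have hcomm : ∀ x y : P, x * y = y * x := by
      have := h1 p hp
      generalize n.factorization p = k at *
      interval_cases k
      · have : Subsingleton P := (Nat.card_eq_one_iff_unique.1 (by simpa using hcP)).1
        intro x y; exact Subsingleton.elim _ _
      · have := isCyclic_of_prime_card (p := p) (by simpa using hcP)
        intro x y; exact (IsCyclic.commGroup (α := P)).mul_comm x y
      · exact fun x y => (IsPGroup.isMulCommutative_of_card_eq_prime_sq hcP).is_comm.comm x y
    have hNC : Subgroup.normalizer (P : Set G) ≤ Subgroup.centralizer (P : Set G) := by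
      set φ := (P : Subgroup G).normalizerMonoidHom
      have hker : φ.ker.index = 1 := by
        by_contra hne
        obtain ⟨r, hr, hrd⟩ := Nat.exists_prime_and_dvd hne
        have : Fact r.Prime := ⟨hr⟩
        by_cases hrp : r = p
        · subst hrp
          apply (P.subtype (Subgroup.le_normalizer (H := (P : Subgroup G)))).not_dvd_index
          refine hrd.trans (Subgroup.index_dvd_of_le ?_)
          intro g hg
          have hg' : (g : G) ∈ P := hg
          rw [MonoidHom.mem_ker]
          ext x
          have := congrArg Subtype.val (hcomm ⟨g, hg'⟩ x)
          show (g : G) * x * (g : G)⁻¹ = x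
          rw [mul_inv_eq_iff_eq_mul]
          exact this
        · obtain ⟨R⟩ : Nonempty (Sylow r (Subgroup.normalizer (P : Set G))) := inferInstance
          apply R.not_dvd_index
          refine hrd.trans (Subgroup.index_dvd_of_le ?_)
          intro g hg
          rw [MonoidHom.mem_ker]
          ext x
          have hrn : r ∈ n.primeFactors := by
            rw [Nat.mem_primeFactors]
            refine ⟨hr, ?_, hn0⟩
            rw [← hn]
            exact hrd.trans ((Subgroup.index_dvd_card _).trans (Subgroup.card_subgroup_dvd_card _))
          have := trivial_action_aux R.2 (h1 p hp) hcP (h2 r hrn p hp hrp) hrp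
            (φ.comp (R.toSubgroup.subtype)) ⟨g, hg⟩ x
          exact congrArg Subtype.val this
      rw [Subgroup.index_eq_one, Subgroup.normalizerMonoidHom_ker,
        Subgroup.subgroupOf_eq_top] at hker
      exact hker
    refine ⟨(MonoidHom.transferSylow P hNC).ker,
      MonoidHom.not_dvd_card_ker_transferSylow P hNC, ?_⟩
    rw [MonoidHom.mem_ker, map_commutatorElement, commutatorElement_eq_one_iff_mul_comm]
    exact hcomm _ _
  rw [← commutatorElement_eq_one_iff_mul_comm, ← orderOf_eq_one_iff]
  by_contra hne
  obtain ⟨r, hr, hrd⟩ := Nat.exists_prime_and_dvd hne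
  obtain ⟨K, hK, hm⟩ := key r (by
    rw [Nat.mem_primeFactors]; exact ⟨hr, hn ▸ hrd.trans (orderOf_dvd_natCard _), hn0⟩)
  exact hK (hrd.trans (Subgroup.orderOf_dvd_natCard K hm))


theorem SkewBrace.zero_eq_one' (A : Type*) [SkewBrace A] : (0 : A) = 1 := by
  have h := SkewBrace.skew_left_distrib (0 : A) (1 : A) 0
  have h := SkewBrace.skew_left_distrib (1 : A) (0 : A) 0
  simp at h
  exact h.symm

def RadW (A : Type*) := A

abbrev RadW.ring (A : Type*) [SkewBrace A] (h1 : ∀ a b : A, a + b = b + a)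
    (h2 : ∀ a b : A, a * b = b * a) : NonUnitalCommRing (RadW A) :=
  letI : AddCommGroup A := { (inferInstance : AddGroup A) with add_comm := h1 }
  have hd : ∀ a b c : A, a * (b + c) = a * b - a + a * c := SkewBrace.skew_left_distrib
  have h0 : ∀ a : A, a * 0 = a := fun a => by rw [SkewBrace.zero_eq_one', mul_one]
  have hs : ∀ a b c : A, a * (b - c) = a * b + a - a * c := fun a b c => by
    have := hd a (b - c) c
    rw [sub_add_cancel] at this
    rw [this]; abel
  have hl : ∀ a b c : A, -a + a * (b + c) - (b + c) = (-a + a * b - b) + (-a + a * c - c) :=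
    fun a b c => by rw [hd]; abel
  { (inferInstance : AddCommGroup A) with
    mul := fun a b : A => (-a + a * b - b : A)
    left_distrib := hl
    right_distrib := fun (a b c : A) => by
      show (-(a+b) + (a+b) * c - c : A) = (-a + a * c - c) + (-b + b * c - c)
      have := hl c a b
      rw [h2 c, h2 c, h2 c] at this
      have e : (-(a+b) + (a+b) * c - c : A) = -c + (a+b) * c - (a+b) := by abel
      rw [e, this]; abel
    zero_mul := fun a : A => by
      show (-0 + 0 * a - a : A) = 0
      rw [h2, h0]; simp
    mul_zero := fun a : A => by
      show (-a + a * 0 - 0 : A) = 0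
      rw [h0]; simp
    mul_assoc := fun (a b c : A) => by
      show (-(-a + a * b - b) + (-a + a * b - b) * c - c : A) =
        -a + a * (-b + b * c - c) - (-b + b * c - c)
      have e1 : (-a + a * b - b) * c = c * (a * b) + c + c - c * a - c * b := by
        have : (-a + a * b - b : A) = a * b - a - b := by abel
        rw [h2, this, hs, hs]; abel
      have e2 : a * (-b + b * c - c) = a * (b * c) + a + a - a * b - a * c := by
        have : (-b + b * c - c : A) = b * c - b - c := by abel
        rw [this, hs, hs]; abel
      rw [e1, e2, h2 c (a * b), mul_assoc, h2 c a, h2 c b]; abel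
    mul_comm := fun (a b : A) => by
      show (-a + a * b - b : A) = -b + b * a - a
      rw [h2 a b]; abel }

theorem nil_of_radical_aux {N U : Type*} [NonUnitalCommRing N] [Finite N] [CommRing U]
    (ι : N → U) (h1 : ∀ a b, ι (a + b) = ι a + ι b) (h2 : ∀ a b, ι (a * b) = ι a * ι b)
    (J : Ideal U) (hJ : ∀ x, x ∈ J ↔ ∃ a, ι a = x)
    (hq : ∀ a : N, ∃ b : N, a + b + a * b = 0) :
    ∃ m : ℕ, J ^ (m + 1) = ⊥ := by
  have h0 : ι 0 = 0 := by have := h1 0 0; simpa using this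
  have hfin : ∀ I : Ideal U, I ≤ J → I.FG := by
    intro I hI
    have hs : (I : Set U).Finite := by
      refine Set.Finite.subset (Set.finite_range ι) ?_
      intro x hx
      exact (hJ x).1 (hI hx)
    exact ⟨hs.toFinset, by rw [hs.coe_toFinset]; exact Ideal.span_eq I⟩
  have hjac : J ≤ Ideal.jacobson ⊥ := by
    intro x hx
    rw [Ideal.mem_jacobson_bot]
    intro y
    obtain ⟨c, hc⟩ := (hJ _).1 (J.mul_mem_right y hx)
    obtain ⟨b, hb⟩ := hq c
    refine IsUnit.of_mul_eq_one (1 + ι b) ?_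
    rw [← hc]
    have : (ι c + 1) * (1 + ι b) = 1 + ι (c + b + c * b) := by
      rw [h1, h1, h2]; ring
    rw [this, hb, h0, add_zero]
  obtain ⟨i, j, hij, he⟩ := Finite.exists_ne_map_eq_of_infinite
    (fun k : ℕ => {a : N | ι a ∈ J ^ (k + 1)})
  wlog hlt : i < j generalizing i j
  · exact this j i hij.symm he.symm (by omega)
  refine ⟨i, ?_⟩
  refine Submodule.eq_bot_of_le_smul_of_le_jacobson_bot J _
    (hfin _ (Ideal.pow_le_self (by omega))) ?_ hjac
  rw [smul_eq_mul, ← pow_succ']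
  refine le_trans ?_ (Ideal.pow_le_pow_right (show i + 1 + 1 ≤ j + 1 by omega))
  intro x hx
  obtain ⟨a, rfl⟩ := (hJ x).1 (Ideal.pow_le_self (by omega) hx)
  exact (Set.ext_iff.1 he a).1 hx

theorem rightNilpotent_aux {A N U : Type*} [SkewBrace A] [NonUnitalCommRing N] [Finite N]
    [CommRing U] (e : A → N) (he : Function.Injective e) (e1 : ∀ a b, e (a + b) = e a + e b)
    (e2 : ∀ a b : A, e (-a + a * b - b) = e a * e b)
    (ι : N → U) (hi : Function.Injective ι)
    (h1 : ∀ a b, ι (a + b) = ι a + ι b) (h2 : ∀ a b, ι (a * b) = ι a * ι b)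
    (J : Ideal U) (hJ : ∀ x, x ∈ J ↔ ∃ a, ι a = x)
    (hq : ∀ a : N, ∃ b : N, a + b + a * b = 0) : IsRightNilpotent A := by
  obtain ⟨m, hm⟩ := nil_of_radical_aux ι h1 h2 J hJ hq
  have e0 : ι (e 0) = 0 := by have := h1 (e 0) (e 0); rw [← e1] at this; simpa using this
  refine ⟨m, ?_⟩
  have key : ∀ k, ∀ a ∈ rightSeries A k, ι (e a) ∈ J ^ (k + 1) := by
    intro k
    induction k with
    | zero => intro a _; rw [zero_add, pow_one, hJ]; exact ⟨_, rfl⟩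
    | succ k ih =>
      intro a ha
      rw [rightSeries] at ha
      induction ha using AddSubgroup.closure_induction with
      | mem x hx =>
        obtain ⟨a, ha, b, rfl⟩ := hx
        rw [e2, h2, pow_succ]
        exact Ideal.mul_mem_mul (ih a ha) ((hJ _).2 ⟨_, rfl⟩)
      | zero => rw [e0]; exact Ideal.zero_mem _
      | add x y _ _ hx hy => rw [e1, h1]; exact Ideal.add_mem _ hx hy
      | neg x _ hx =>
        have : ι (e (-x)) + ι (e x) = 0 := by rw [← h1, ← e1, neg_add_cancel, e0]
        rw [eq_neg_of_add_eq_zero_left this]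
        exact neg_mem hx
  rw [eq_bot_iff]
  intro a ha
  have := key m a ha
  rw [hm, Ideal.mem_bot, ← e0] at this
  exact he (hi this)

theorem rightNilpotent_of_comm (A : Type*) [Finite A] [SkewBrace A]
    (h1 : ∀ a b : A, a + b = b + a)
    (h2 : ∀ a b : A, a * b = b * a) : IsRightNilpotent A := by
  let _ := RadW.ring A h1 h2
  have : Finite (RadW A) := ‹Finite A›
  refine rightNilpotent_aux (A := A) (N := RadW A) (U := Unitization ℤ (RadW A)) (fun a => a)
    (fun _ _ h => h) (fun _ _ => rfl) (fun _ _ => rfl) (fun a => Unitization.inr a)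
    Unitization.inr_injective (Unitization.inr_add ℤ) (Unitization.inr_mul ℤ)
    (RingHom.ker (Unitization.fstHom ℤ (RadW A))) ?_ ?_
  · intro x
    constructor
    · intro hx
      have hx : x.fst = 0 := hx
      refine ⟨x.snd, ?_⟩
      ext
      · simp [hx]
      · simp
    · rintro ⟨a, rfl⟩
      exact Unitization.fst_inr ℤ a
  · intro (c : A)
    refine ⟨(c⁻¹ : A), ?_⟩
    show (c + c⁻¹ + (-c + c * c⁻¹ - c⁻¹) : A) = 0
    rw [mul_inv_cancel, ← SkewBrace.zero_eq_one', add_zero, h1 c, add_assoc, ← add_sub_assoc]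
    simp


/-- Underlying set of the order `p^3 m` example. -/
@[ext] structure HBr (R C : Type) where
  x : R
  y : R
  z : R
  w : C

namespace HBr
variable {R C : Type} [CommRing R] [AddCommGroup C]

def equiv (R C : Type) : HBr R C ≃ R × R × R × C where
  toFun a := (a.x, a.y, a.z, a.w)
  invFun a := ⟨a.1, a.2.1, a.2.2.1, a.2.2.2⟩
  left_inv _ := rfl
  right_inv _ := rfl

instance : Zero (HBr R C) := ⟨⟨0, 0, 0, 0⟩⟩
instance : One (HBr R C) := ⟨⟨0, 0, 0, 0⟩⟩
instance : Add (HBr R C) :=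
  ⟨fun a b => ⟨a.x + b.x, a.y + b.y, a.z + b.z + a.x * b.y - b.x * a.y, a.w + b.w⟩⟩
instance : Neg (HBr R C) := ⟨fun a => ⟨-a.x, -a.y, -a.z, -a.w⟩⟩
instance : Mul (HBr R C) :=
  ⟨fun a b => ⟨a.x + b.x, a.y + b.y + a.z * b.x, a.z + b.z, a.w + b.w⟩⟩
instance : Inv (HBr R C) := ⟨fun a => ⟨-a.x, -a.y + a.z * a.x, -a.z, -a.w⟩⟩

theorem zero_def : (0 : HBr R C) = ⟨0, 0, 0, 0⟩ := rfl
theorem one_def : (1 : HBr R C) = ⟨0, 0, 0, 0⟩ := rfl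
theorem add_def (a b : HBr R C) :
    a + b = ⟨a.x + b.x, a.y + b.y, a.z + b.z + a.x * b.y - b.x * a.y, a.w + b.w⟩ := rfl
theorem neg_def (a : HBr R C) : -a = ⟨-a.x, -a.y, -a.z, -a.w⟩ := rfl
theorem mul_def (a b : HBr R C) :
    a * b = ⟨a.x + b.x, a.y + b.y + a.z * b.x, a.z + b.z, a.w + b.w⟩ := rfl
theorem inv_def (a : HBr R C) : a⁻¹ = ⟨-a.x, -a.y + a.z * a.x, -a.z, -a.w⟩ := rfl

instance : AddGroup (HBr R C) :=
  AddGroup.ofLeftAxioms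
    (by intro a b c; simp only [add_def, HBr.mk.injEq]; refine ⟨?_, ?_, ?_, ?_⟩ <;> first | ring | abel)
    (by intro a; simp [add_def, zero_def])
    (by intro a; simp only [add_def, neg_def, zero_def, HBr.mk.injEq]
        refine ⟨?_, ?_, ?_, ?_⟩ <;> first | ring | abel)

instance : Group (HBr R C) :=
  Group.ofLeftAxioms
    (by intro a b c; simp only [mul_def, HBr.mk.injEq]; refine ⟨?_, ?_, ?_, ?_⟩ <;> first | ring | abel)
    (by intro a; simp [mul_def, one_def])
    (by intro a; simp only [mul_def, inv_def, one_def, HBr.mk.injEq]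
        refine ⟨?_, ?_, ?_, ?_⟩ <;> first | ring | abel)

instance : SkewBrace (HBr R C) where
  skew_left_distrib a b c := by
    rw [sub_eq_add_neg]
    simp only [mul_def, add_def, neg_def, HBr.mk.injEq]
    refine ⟨?_, ?_, ?_, ?_⟩ <;> first | ring | abel

theorem not_rightNilpotent [Nontrivial R] : ¬ IsRightNilpotent (HBr R C) := by
  rintro ⟨m, hm⟩
  have key : ∀ k, (⟨0, 1, 0, 0⟩ : HBr R C) ∈ rightSeries (HBr R C) k ∧
      (⟨0, 0, 1, 0⟩ : HBr R C) ∈ rightSeries (HBr R C) k := by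
    intro k
    induction k with
    | zero => exact ⟨trivial, trivial⟩
    | succ k ih =>
      have hz : (⟨0, 0, 1, 0⟩ : HBr R C) ∈ rightSeries (HBr R C) (k + 1) := by
        refine AddSubgroup.subset_closure ⟨_, ih.1, ⟨1, 0, 0, 0⟩, ?_⟩
        rw [sub_eq_add_neg]
        simp [mul_def, add_def, neg_def]
      have hy : (⟨0, 1, 1, 0⟩ : HBr R C) ∈ rightSeries (HBr R C) (k + 1) := by
        refine AddSubgroup.subset_closure ⟨_, ih.2, ⟨1, 0, 0, 0⟩, ?_⟩
        rw [sub_eq_add_neg]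
        simp [mul_def, add_def, neg_def]
      refine ⟨?_, hz⟩
      have := AddSubgroup.sub_mem _ hy hz
      rw [sub_eq_add_neg] at this
      simpa [add_def, neg_def] using this
  have := (key m).1
  rw [hm, AddSubgroup.mem_bot, zero_def] at this
  simp at this

end HBr

/-- Underlying set of the semidirect example. -/
@[ext] structure SBr (F C : Type) [Field F] [AddCommGroup C] (χ : Multiplicative C →* Fˣ) where
  f : F
  c : C

namespace SBr
variable {F C : Type} [Field F] [AddCommGroup C] {χ : Multiplicative C →* Fˣ}

def equiv (χ : Multiplicative C →* Fˣ) : SBr F C χ ≃ F × C where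
  toFun a := (a.f, a.c)
  invFun a := ⟨a.1, a.2⟩
  left_inv _ := rfl
  right_inv _ := rfl

/-- The character, additively. -/
def ch (χ : Multiplicative C →* Fˣ) (c : C) : F := (χ (Multiplicative.ofAdd c) : F)

theorem ch_add (a b : C) : ch χ (a + b) = ch χ a * ch χ b := by simp [ch]
theorem ch_zero : ch χ 0 = 1 := by simp [ch]
theorem ch_neg (a : C) : ch χ (-a) = (ch χ a)⁻¹ := by simp [ch]
theorem ch_ne (a : C) : ch χ a ≠ 0 := by simp [ch]

instance : Zero (SBr F C χ) := ⟨⟨0, 0⟩⟩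
instance : One (SBr F C χ) := ⟨⟨0, 0⟩⟩
instance : Add (SBr F C χ) := ⟨fun a b => ⟨a.f + ch χ a.c * b.f, a.c + b.c⟩⟩
instance : Neg (SBr F C χ) := ⟨fun a => ⟨-(ch χ a.c)⁻¹ * a.f, -a.c⟩⟩
instance : Mul (SBr F C χ) := ⟨fun a b => b + a⟩
instance : Inv (SBr F C χ) := ⟨fun a => -a⟩

theorem zero_def : (0 : SBr F C χ) = ⟨0, 0⟩ := rfl
theorem add_def (a b : SBr F C χ) : a + b = ⟨a.f + ch χ a.c * b.f, a.c + b.c⟩ := rfl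
theorem neg_def (a : SBr F C χ) : -a = ⟨-(ch χ a.c)⁻¹ * a.f, -a.c⟩ := rfl
theorem mul_def (a b : SBr F C χ) : a * b = b + a := rfl

instance : AddGroup (SBr F C χ) :=
  AddGroup.ofLeftAxioms
    (by intro a b c; simp only [add_def, SBr.mk.injEq, ch_add]
        refine ⟨?_, ?_⟩ <;> first | ring | abel)
    (by intro a; simp [add_def, zero_def, ch_zero])
    (by intro a; simp [add_def, zero_def, neg_def, ch_neg])

instance : Group (SBr F C χ) :=
  Group.ofLeftAxioms
    (by intro a b c; simp only [mul_def, add_assoc])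
    (by intro a; exact add_zero a)
    (by intro a; exact add_neg_cancel a)

instance : SkewBrace (SBr F C χ) where
  skew_left_distrib a b c := by
    simp only [mul_def]
    simp [add_assoc]

theorem not_rightNilpotent (c : C) (hc : ch χ c ≠ 1) : ¬ IsRightNilpotent (SBr F C χ) := by
  rintro ⟨m, hm⟩
  have key : ∀ k, ∀ f : F, (⟨f, 0⟩ : SBr F C χ) ∈ rightSeries (SBr F C χ) k := by
    intro k
    induction k with
    | zero => exact fun _ => trivial
    | succ k ih =>
      intro f
      refine AddSubgroup.subset_closure ⟨_, ih (f / (ch χ c - 1)), ⟨0, c⟩, ?_⟩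
      rw [sub_eq_add_neg]
      have := sub_ne_zero.2 hc
      simp [mul_def, add_def, neg_def, ch_zero]
      field_simp
      ring
  have := key m 1
  rw [hm, AddSubgroup.mem_bot, zero_def] at this
  simp at this

end SBr

theorem forward_cube (n p : ℕ) (hn : 0 < n) (hp : p.Prime) (h : p ^ 3 ∣ n) :
    ∃ (A : Type) (_ : Fintype A) (_ : SkewBrace A), Fintype.card A = n ∧ ¬ IsRightNilpotent A := by
  obtain ⟨m, rfl⟩ := h
  have : Fact p.Prime := ⟨hp⟩
  have : NeZero m := ⟨by rintro rfl; simp at hn⟩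
  let _ : Fintype (HBr (ZMod p) (ZMod m)) := Fintype.ofEquiv _ (HBr.equiv _ _).symm
  refine ⟨HBr (ZMod p) (ZMod m), inferInstance, inferInstance, ?_, HBr.not_rightNilpotent⟩
  rw [Fintype.card_congr (HBr.equiv _ _)]
  simp [ZMod.card]
  ring

theorem forward_ndvd (n p q : ℕ) (hn : 0 < n) (hp : p.Prime) (hq : q.Prime) (hpn : p ∣ n)
    (hqn : q ∣ n) (hpq : p ≠ q) (h : p ∣ q ^ n.factorization q - 1) :
    ∃ (A : Type) (_ : Fintype A) (_ : SkewBrace A), Fintype.card A = n ∧ ¬ IsRightNilpotent A := by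
  have : Fact p.Prime := ⟨hp⟩
  have : Fact q.Prime := ⟨hq⟩
  obtain ⟨m, hm⟩ := Nat.ordProj_dvd n q
  have hk : n.factorization q ≠ 0 := (hq.factorization_pos_of_dvd hn.ne' hqn).ne'
  generalize n.factorization q = k at *
  subst hm
  have : NeZero m := ⟨by rintro rfl; simp at hn⟩
  have hpm : p ∣ m := by
    rcases hp.dvd_mul.1 hpn with h' | h'
    · exact absurd ((Nat.prime_dvd_prime_iff_eq hp hq).1 (hp.dvd_of_dvd_pow h')) hpq
    · exact h'
  have : Finite (GaloisField q k) := Nat.finite_of_card_ne_zero (by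
    rw [GaloisField.card q k hk]; exact pow_ne_zero _ hq.ne_zero)
  let _ : Fintype (GaloisField q k) := Fintype.ofFinite _
  have hcard : Nat.card (GaloisField q k)ˣ = q ^ k - 1 := by
    rw [Nat.card_units, GaloisField.card q k hk]
  obtain ⟨u, hu⟩ := exists_prime_orderOf_dvd_card' (G := (GaloisField q k)ˣ) p (hcard ▸ h)
  have hum : u ^ m = 1 := by rw [← orderOf_dvd_iff_pow_eq_one, hu]; exact hpm
  let χ' : ZMod m →+ Additive (GaloisField q k)ˣ :=
    ZMod.lift m ⟨zmultiplesHom _ (Additive.ofMul u), by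
      simp only [zmultiplesHom_apply, natCast_zsmul]
      rw [← ofMul_pow, hum]; rfl⟩
  let χ : Multiplicative (ZMod m) →* (GaloisField q k)ˣ := AddMonoidHom.toMultiplicativeLeft χ'
  have hχ : χ (Multiplicative.ofAdd 1) = u := by
    have : χ' ((1 : ℤ) : ZMod m) = Additive.ofMul u := by
      simp only [χ', ZMod.lift_coe]; simp
    rw [Int.cast_one] at this
    exact congrArg Additive.toMul this
  let _ : Fintype (SBr _ _ χ) := Fintype.ofEquiv _ (SBr.equiv χ).symm
  refine ⟨SBr _ _ χ, inferInstance, inferInstance, ?_, SBr.not_rightNilpotent 1 ?_⟩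
  · rw [Fintype.card_congr (SBr.equiv χ), Fintype.card_prod, ZMod.card, ← Nat.card_eq_fintype_card,
      GaloisField.card q k hk]
  · rw [SBr.ch, hχ]
    intro h1
    have : u = 1 := Units.ext h1
    rw [this, orderOf_one] at hu
    exact hp.ne_one hu.symm

/-- Every skew brace of order `n` is right-nilpotent iff the prime
factorisation of `n` is cube-free and `p ∤ q^{α_q} - 1` for distinct primes
`p, q` dividing `n`. -/
theorem every_skewBrace_is_right_nilpotent_iff (n : ℕ) (hn : 0 < n) :
    (∀ (A : Type) [Fintype A] [SkewBrace A], Fintype.card A = n →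
      IsRightNilpotent A) ↔
    ((∀ p ∈ n.primeFactors, n.factorization p ≤ 2) ∧
      (∀ p ∈ n.primeFactors, ∀ q ∈ n.primeFactors, p ≠ q →
        ¬ p ∣ q ^ n.factorization q - 1)) := by
  constructor
  · intro H
    refine ⟨?_, ?_⟩
    · intro p hp
      by_contra hlt
      obtain ⟨A, i1, i2, hc, hA⟩ := forward_cube n p hn (Nat.prime_of_mem_primeFactors hp)
        ((pow_dvd_pow p (by omega)).trans (Nat.ordProj_dvd n p))
      exact hA (H A hc)
    · intro p hp q hq hpq hd
      obtain ⟨A, i1, i2, hc, hA⟩ := forward_ndvd n p q hn (Nat.prime_of_mem_primeFactors hp)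
        (Nat.prime_of_mem_primeFactors hq) (Nat.dvd_of_mem_primeFactors hp)
        (Nat.dvd_of_mem_primeFactors hq) hpq hd
      exact hA (H A hc)
  · rintro ⟨h1, h2⟩ A _ _ hA
    rw [← Nat.card_eq_fintype_card] at hA
    refine rightNilpotent_of_comm A ?_ ?_
    · intro a b
      exact comm_of_cond (G := Multiplicative A) hA h1 h2 (Multiplicative.ofAdd a)
        (Multiplicative.ofAdd b)
    · exact fun a b => comm_of_cond hA h1 h2 a b
end

section
/- Let n be a natural number with prime factorisation n = p_1^{α_1} ⋯ p_t^{α_t} (the p_i distinct primes). Then every skew brace of order n is annihilator nilpotent if and only if α_i ≤ 2 for every i and p_i does not divide p_j^{α_j} − 1 for all i ≠ j. -/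
/-- The annihilator series of a skew brace `A`, described internally:
`Ann_0(A) = {0}` and `Ann_{m+1}(A)` is the preimage in `A` of
`Ann(A/Ann_m(A)) = Z(A/Ann_m(A),∘) ∩ Z(A/Ann_m(A),+) ∩ Ker(λ̄)`; concretely,
`a ∈ Ann_{m+1}(A)` iff for all `b`, `(a + b) - (b + a)`, `(-a + a ∘ b) - b`
and `(a ∘ b) - (b ∘ a)` all lie in `Ann_m(A)` (cosets being taken with
respect to `+`). -/
def annSeries (A : Type*) [SkewBrace A] : ℕ → Set A
  | 0 => {0}
  | m + 1 => {a : A | ∀ b : A,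
      a + b - (b + a) ∈ annSeries A m ∧ (-a + a * b) - b ∈ annSeries A m ∧
        a * b - b * a ∈ annSeries A m}

/-- A skew brace is annihilator nilpotent if `Ann_m(A) = A` for some `m`. -/
def IsAnnihilatorNilpotent (A : Type*) [SkewBrace A] : Prop :=
  ∃ m : ℕ, annSeries A m = Set.univ


namespace SBHelp

/-- Coprime action lemma. -/
lemma coprime_action {Q P : Type*} [Group Q] [Group P] [Finite P] {p q k : ℕ}
    (hp : p.Prime) (hq : q.Prime) (hpq : q ≠ p) (hQ : IsPGroup q Q)
    (hP : Nat.card P = p ^ k) (hk : k ≤ 2) (hd : ¬ q ∣ p ^ k - 1)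
    (φ : Q →* MulAut P) : φ = 1 := by
  let : MulDistribMulAction Q P := MulDistribMulAction.compHom P φ
  have hs : ∀ (g : Q) (x : P), g • x = φ g x := fun _ _ => rfl
  have := Fact.mk hq
  have hmod := hQ.card_modEq_card_fixedPoints P
  have hF : Nat.card (MulAction.fixedPoints Q P) = Nat.card (FixedPoints.subgroup Q P) := rfl
  obtain ⟨j, hj, hjc⟩ := (Nat.dvd_prime_pow hp).1 (hP ▸ (FixedPoints.subgroup Q P).card_subgroup_dvd_card)
  rw [hF, hjc, hP] at hmod
  have hjk : j = k := by
    by_contra hne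
    have hlt : j < k := lt_of_le_of_ne hj hne
    have h1 : q ∣ p ^ k - p ^ j :=
      (Nat.modEq_iff_dvd' (Nat.pow_le_pow_right hp.pos hj)).1 hmod.symm
    have h2 : p ^ k - p ^ j = p ^ j * (p ^ (k - j) - 1) := by
      rw [Nat.mul_sub, ← pow_add, Nat.add_sub_cancel' hj, mul_one]
    rw [h2] at h1
    rcases (hq.dvd_mul).1 h1 with h | h
    · exact hpq ((Nat.prime_dvd_prime_iff_eq hq hp).1 (hq.dvd_of_dvd_pow h))
    · apply hd
      refine h.trans (Nat.pow_sub_one_dvd_pow_sub_one p ?_)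
      have : k - j = 1 ∨ k - j = 2 := by omega
      rcases this with h | h
      · rw [h]; exact one_dvd _
      · have : k = 2 := by omega
        rw [h, this]
  have htop : FixedPoints.subgroup Q P = ⊤ := by
    apply Subgroup.eq_top_of_card_eq
    rw [hjc, hP, hjk]
  ext g x
  have : x ∈ FixedPoints.subgroup Q P := htop ▸ Subgroup.mem_top x
  exact this g

lemma comm_of_pow_le_two {P : Type*} [Group P] [Finite P] {p k : ℕ} (hp : p.Prime)
    (hP : Nat.card P = p ^ k) (hk : k ≤ 2) (a b : P) : a * b = b * a := by
  have := Fact.mk hp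
  have : k = 0 ∨ k = 1 ∨ k = 2 := by omega
  rcases this with rfl | rfl | rfl
  · have : Subsingleton P := (Nat.card_eq_one_iff_unique.1 (by simpa using hP)).1
    exact Subsingleton.elim _ _
  · have : IsCyclic P := isCyclic_of_prime_card (p := p) (by simpa using hP)
    exact (IsCyclic.commGroup (α := P)).mul_comm a b
  · exact (IsPGroup.isMulCommutative_of_card_eq_prime_sq hP).is_comm.comm a b

lemma norm_le_cent {G : Type*} [Group G] [Finite G]
    (h1 : ∀ p ∈ (Nat.card G).primeFactors, (Nat.card G).factorization p ≤ 2)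
    (h2 : ∀ p ∈ (Nat.card G).primeFactors, ∀ q ∈ (Nat.card G).primeFactors, p ≠ q →
        ¬ p ∣ q ^ (Nat.card G).factorization q - 1)
    {p : ℕ} [hp : Fact p.Prime] (hpn : p ∈ (Nat.card G).primeFactors) (P : Sylow p G) :
    Subgroup.normalizer (P : Set G) ≤ Subgroup.centralizer (P : Set G) := by
  have hcard := P.card_eq_multiplicity
  have hcomm := comm_of_pow_le_two hp.out hcard (h1 p hpn)
  set N := Subgroup.normalizer ((P : Subgroup G) : Set G) with hN
  set f := (P : Subgroup G).normalizerMonoidHom with hf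
  have hker : f.ker = (Subgroup.centralizer (P : Set G)).subgroupOf N :=
    (P : Subgroup G).normalizerMonoidHom_ker
  suffices h : f.ker = ⊤ by
    rw [hker] at h
    exact Subgroup.subgroupOf_eq_top.1 h
  rw [← Subgroup.index_eq_one]
  by_contra hne
  obtain ⟨q, hq, hqd⟩ := Nat.exists_prime_and_dvd hne
  have := Fact.mk hq
  by_cases hqp : q = p
  · subst hqp
    have hle : (P : Subgroup G) ≤ Subgroup.centralizer (P : Set G) := by
      intro x hx y hy
      exact congrArg Subtype.val (hcomm ⟨y, hy⟩ ⟨x, hx⟩)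
    have : f.ker.index ∣ (P : Subgroup G).index := by
      rw [hker]
      exact (Subgroup.relIndex_dvd_of_le_left N hle).trans
        (Subgroup.relIndex_dvd_index_of_le Subgroup.le_normalizer)
    exact P.not_dvd_index (hqd.trans this)
  · obtain ⟨Q⟩ : Nonempty (Sylow q N) := inferInstance
    have hqn : q ∈ (Nat.card G).primeFactors := by
      refine Nat.mem_primeFactors.2 ⟨hq, ?_, Nat.card_pos.ne'⟩
      exact (hqd.trans (f.ker.index_dvd_card)).trans N.card_subgroup_dvd_card
    have := coprime_action hp.out hq hqp Q.isPGroup' hcard (h1 p hpn) (h2 q hqn p hpn hqp)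
      (f.comp (Q : Subgroup N).subtype)
    have hle : (Q : Subgroup N) ≤ f.ker := by
      intro x hx
      exact DFunLike.congr_fun this ⟨x, hx⟩
    exact Q.not_dvd_index (hqd.trans (Subgroup.index_dvd_of_le hle))

open scoped commutatorElement in
lemma group_comm {G : Type*} [Group G] [Finite G]
    (h1 : ∀ p ∈ (Nat.card G).primeFactors, (Nat.card G).factorization p ≤ 2)
    (h2 : ∀ p ∈ (Nat.card G).primeFactors, ∀ q ∈ (Nat.card G).primeFactors, p ≠ q →
        ¬ p ∣ q ^ (Nat.card G).factorization q - 1) (a b : G) : a * b = b * a := by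
  have hbot : commutator G = ⊥ := by
    rw [← Subgroup.card_eq_one]
    by_contra hne
    obtain ⟨p, hp, hpd⟩ := Nat.exists_prime_and_dvd hne
    have := Fact.mk hp
    have hpn : p ∈ (Nat.card G).primeFactors :=
      Nat.mem_primeFactors.2 ⟨hp, hpd.trans (commutator G).card_subgroup_dvd_card, Nat.card_pos.ne'⟩
    obtain ⟨P⟩ : Nonempty (Sylow p G) := inferInstance
    have hP := norm_le_cent h1 h2 hpn P
    have hle : commutator G ≤ (MonoidHom.transferSylow P hP).ker := by
      rw [commutator_def, Subgroup.commutator_le]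
      intro x _ y _
      have hc := comm_of_pow_le_two hp P.card_eq_multiplicity (h1 p hpn)
      rw [MonoidHom.mem_ker, map_commutatorElement, commutatorElement_eq_one_iff_mul_comm]
      exact hc _ _
    exact MonoidHom.not_dvd_card_ker_transferSylow P hP (hpd.trans (Subgroup.card_dvd_of_le hle))
  have : ⁅a, b⁆ ∈ commutator G :=
    Subgroup.commutator_mem_commutator (Subgroup.mem_top a) (Subgroup.mem_top b)
  rw [hbot, Subgroup.mem_bot] at this
  exact commutatorElement_eq_one_iff_mul_comm.1 this

section comm
variable {A : Type*} [SkewBrace A]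

lemma mul_zero' (a : A) : a * 0 = a := by
  have h := SkewBrace.skew_left_distrib a 0 0
  rw [add_zero] at h
  have h2 : a * 0 - a = 0 := by
    have : a * 0 - a + a * 0 = 0 + a * 0 := by rw [zero_add]; exact h.symm
    exact add_right_cancel this
  exact sub_eq_zero.1 h2

lemma zero_mul' (a : A) : 0 * a = a := by
  have h : (0 : A) = 1 := by
    have := mul_zero' (1 : A)
    rwa [one_mul] at this
  rw [h, one_mul]

lemma comm_nilpotent [Finite A] (hadd : ∀ a b : A, a + b = b + a)
    (hmul : ∀ a b : A, a * b = b * a) : IsAnnihilatorNilpotent A := by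
  let st : A → A → A := fun a b => -a + a * b - b
  let : AddCommGroup A := { (inferInstance : AddGroup A) with add_comm := hadd }
  have hm : ∀ a b : A, a * b = a + b + st a b := by
    intro a b; simp only [st]; abel
  have hd : ∀ a b c : A, a * (b + c) = a * b - a + a * c := SkewBrace.skew_left_distrib
  have hcomm : ∀ a b, st a b = st b a := by
    intro a b; simp only [st]; rw [hmul a b]; abel
  have hr : ∀ a b c, st a (b + c) = st a b + st a c := by
    intro a b c; simp only [st]; rw [hd]; abel
  have hl : ∀ a b c, st (a + b) c = st a c + st b c := by
    intro a b c; rw [hcomm, hr, hcomm c, hcomm c]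
  have hassoc : ∀ a b c, st (st a b) c = st a (st b c) := by
    intro a b c
    have h := mul_assoc a b c
    rw [hm (a * b) c, hm a (b * c), hm a b, hm b c, hl, hl, hr, hr] at h
    have h' : (a + b + st a b + c + (st a c + st b c)) + st (st a b) c
      = (a + b + st a b + c + (st a c + st b c)) + st a (st b c) := by
      rw [add_assoc, h]; abel
    exact add_left_cancel h'
  have hz : ∀ a, st a 0 = 0 := by
    intro a; simp only [st]; rw [mul_zero']; abel
  have hz' : ∀ a, st 0 a = 0 := by intro a; rw [hcomm, hz]
  have hirr : ∀ x b, st x b = x → x = 0 := by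
    intro x b h
    have hn : st x (-b) = -x := by
      have := hr x b (-b)
      rw [add_neg_cancel, hz, h] at this
      exact eq_neg_of_add_eq_zero_right this.symm
    have h3 : x * (-b) = 0 * (-b) := by
      rw [hm, hn, zero_mul']; abel
    exact mul_right_cancel h3
  have h0 : ∀ m, (0 : A) ∈ annSeries A m := by
    intro m
    induction m with
    | zero => simp [annSeries]
    | succ m ih =>
      intro b
      refine ⟨?_, ?_, ?_⟩
      · rw [hadd, sub_self]; exact ih
      · have := hz' b; simp only [st] at this; rw [this]; exact ih
      · rw [hmul, sub_self]; exact ih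
  have hmem : ∀ m a, a ∈ annSeries A (m + 1) ↔ ∀ b, st a b ∈ annSeries A m := by
    intro m a
    constructor
    · intro h b; exact (h b).2.1
    · intro h b
      refine ⟨?_, h b, ?_⟩
      · rw [hadd, sub_self]; exact h0 m
      · rw [hmul, sub_self]; exact h0 m
  have hmono1 : ∀ m, annSeries A m ⊆ annSeries A (m + 1) := by
    intro m
    induction m with
    | zero =>
      intro a ha
      have : a = 0 := ha
      subst this; exact h0 _
    | succ m ih =>
      intro a ha
      rw [hmem] at ha ⊢
      exact fun b => ih (ha b)
  have hmono : Monotone (annSeries A) := monotone_nat_of_le_succ hmono1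
  let r : A → A → Prop := fun x y => x ≠ 0 ∧ ∃ b, st y b = x
  have : IsTrans A r := ⟨by
    rintro x y z ⟨hx, b, rfl⟩ ⟨hy, c, rfl⟩
    exact ⟨hx, st c b, (hassoc _ _ _).symm⟩⟩
  have : Std.Irrefl r := ⟨by
    rintro x ⟨hx, b, h⟩
    exact hx (hirr x b h)⟩
  have wf : WellFounded r := Finite.wellFounded_of_trans_of_irrefl r
  have key : ∀ S : A → A, (∀ b, ∃ m, S b ∈ annSeries A m) → ∃ m, ∀ b, S b ∈ annSeries A m := by
    intro S hS
    choose f hf using hS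
    obtain ⟨M, hM⟩ := (Set.finite_range f).bddAbove
    exact ⟨M, fun b => hmono (hM ⟨b, rfl⟩) (hf b)⟩
  have all : ∀ a, ∃ m, a ∈ annSeries A m := by
    intro a
    induction a using wf.induction with
    | _ a ih =>
      obtain ⟨m, h⟩ := key (st a) (by
        intro b
        by_cases hb : st a b = 0
        · exact ⟨0, hb⟩
        · exact ih _ ⟨hb, b, rfl⟩)
      exact ⟨m + 1, (hmem m a).2 h⟩
  obtain ⟨m, h⟩ := key id all
  exact ⟨m, Set.eq_univ_of_forall h⟩

end comm

/-- Trivial skew brace on a group. -/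
def TrivB (G : Type) : Type := G

instance (G : Type) [h : Group G] : Group (TrivB G) := h
instance (G : Type) [Group G] : AddGroup (TrivB G) :=
  (inferInstance : AddGroup (Additive G))

instance (G : Type) [Group G] : SkewBrace (TrivB G) where
  skew_left_distrib a b c := by
    have h : ∀ a b c : G, a * (b * c) = a * b / a * (a * c) := fun a b c => by simp [div_eq_mul_inv, mul_assoc]
    exact h a b c

instance (A B : Type) [SkewBrace A] [SkewBrace B] : SkewBrace (A × B) where
  skew_left_distrib a b c :=
    Prod.ext (SkewBrace.skew_left_distrib _ _ _) (SkewBrace.skew_left_distrib _ _ _)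

lemma annSeries_fst (A B : Type) [SkewBrace A] [SkewBrace B] (m : ℕ) :
    ∀ x : A × B, x ∈ annSeries (A × B) m → x.1 ∈ annSeries A m := by
  induction m with
  | zero => intro x hx; exact congrArg Prod.fst (show x = 0 from hx)
  | succ m ih =>
    intro x hx b
    have h := hx (b, 0)
    exact ⟨ih _ h.1, ih _ h.2.1, ih _ h.2.2⟩

lemma exists_bad {n : ℕ} (hn : 0 < n) (B : Type) [Finite B] [SkewBrace B] [Nontrivial B]
    (hB : ∀ a : B, (∀ b : B, a + b = b + a ∧ a * b = a + b) → a = 0)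
    (hd : Nat.card B ∣ n) :
    ¬ (∀ (A : Type) [Fintype A] [SkewBrace A], Fintype.card A = n →
      IsAnnihilatorNilpotent A) := by
  intro H
  obtain ⟨m, hm⟩ := hd
  have hm0 : m ≠ 0 := by rintro rfl; simp at hm; omega
  have : NeZero m := ⟨hm0⟩
  let C := TrivB (Multiplicative (ZMod m))
  let _ : Fintype C := (inferInstance : Fintype (ZMod m))
  have : Fintype B := Fintype.ofFinite B
  have hc : Fintype.card C = m := ZMod.card m
  obtain ⟨k, hk⟩ := H (B × C) (by
    rw [Fintype.card_prod, hc, hm, Nat.card_eq_fintype_card])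
  have hz : ∀ k, annSeries B k ⊆ {0} := by
    intro k
    induction k with
    | zero => exact subset_rfl
    | succ k ih =>
      intro a ha
      refine hB a fun b => ⟨?_, ?_⟩
      · exact sub_eq_zero.1 (ih (ha b).1)
      · have := sub_eq_zero.1 (ih (ha b).2.1)
        rw [neg_add_eq_iff_eq_add] at this
        exact this
  obtain ⟨b, hb⟩ := exists_ne (0 : B)
  refine hb (hz k (annSeries_fst B C k (b, 0) ?_))
  rw [hk]; trivial

/-- A skew brace of order `p ^ 3` with trivial annihilator. -/
@[ext] structure Hei (R : Type) where
  x : R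
  y : R
  z : R

variable {R : Type}

def heiEquiv : Hei R ≃ R × R × R where
  toFun a := (a.x, a.y, a.z)
  invFun a := ⟨a.1, a.2.1, a.2.2⟩
  left_inv _ := rfl
  right_inv _ := rfl

instance [CommRing R] : Add (Hei R) :=
  ⟨fun a b => ⟨a.x + b.x, a.y + b.y, a.z + b.z + a.x * b.y - b.x * a.y⟩⟩
instance [CommRing R] : Zero (Hei R) := ⟨⟨0, 0, 0⟩⟩
instance [CommRing R] : Neg (Hei R) := ⟨fun a => ⟨-a.x, -a.y, -a.z⟩⟩

instance [CommRing R] : AddGroup (Hei R) where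
  add_assoc a b c := by
    apply Hei.ext
    · exact add_assoc _ _ _
    · exact add_assoc _ _ _
    · change (a.z + b.z + a.x * b.y - b.x * a.y) + c.z + (a.x + b.x) * c.y - c.x * (a.y + b.y)
        = a.z + (b.z + c.z + b.x * c.y - c.x * b.y) + a.x * (b.y + c.y) - (b.x + c.x) * a.y
      ring
  zero_add a := by
    apply Hei.ext
    · exact zero_add _
    · exact zero_add _
    · change 0 + a.z + 0 * a.y - a.x * 0 = a.z
      ring
  add_zero a := by
    apply Hei.ext
    · exact add_zero _
    · exact add_zero _
    · change a.z + 0 + a.x * 0 - 0 * a.y = a.z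
      ring
  neg_add_cancel a := by
    apply Hei.ext
    · exact neg_add_cancel _
    · exact neg_add_cancel _
    · change -a.z + a.z + -a.x * a.y - a.x * -a.y = 0
      ring
  nsmul := nsmulRec
  zsmul := zsmulRec

instance [CommRing R] : Group (Hei R) where
  mul a b := ⟨a.x + b.x, a.y + b.y + a.z * b.x, a.z + b.z⟩
  one := ⟨0, 0, 0⟩
  inv a := ⟨-a.x, -a.y + a.z * a.x, -a.z⟩
  mul_assoc a b c := by
    apply Hei.ext
    · exact add_assoc _ _ _
    · change (a.y + b.y + a.z * b.x) + c.y + (a.z + b.z) * c.x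
        = a.y + (b.y + c.y + b.z * c.x) + a.z * (b.x + c.x)
      ring
    · exact add_assoc _ _ _
  one_mul a := by
    apply Hei.ext
    · exact zero_add _
    · change 0 + a.y + 0 * a.x = a.y
      ring
    · exact zero_add _
  mul_one a := by
    apply Hei.ext
    · exact add_zero _
    · change a.y + 0 + a.z * 0 = a.y
      ring
    · exact add_zero _
  inv_mul_cancel a := by
    apply Hei.ext
    · exact neg_add_cancel _
    · change -a.y + a.z * a.x + a.y + -a.z * a.x = 0
      ring
    · exact neg_add_cancel _

lemma Hei.add_def [CommRing R] (a b : Hei R) :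
    a + b = ⟨a.x + b.x, a.y + b.y, a.z + b.z + a.x * b.y - b.x * a.y⟩ := rfl
lemma Hei.neg_def [CommRing R] (a : Hei R) : -a = ⟨-a.x, -a.y, -a.z⟩ := rfl
lemma Hei.mul_def [CommRing R] (a b : Hei R) :
    a * b = ⟨a.x + b.x, a.y + b.y + a.z * b.x, a.z + b.z⟩ := rfl

instance [CommRing R] : SkewBrace (Hei R) where
  skew_left_distrib a b c := by
    rw [sub_eq_add_neg]
    simp only [Hei.add_def, Hei.neg_def, Hei.mul_def]
    apply Hei.ext <;> simp only <;> ring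

lemma hei_ann [CommRing R] (a : Hei R) (h : ∀ b : Hei R, a + b = b + a ∧ a * b = a + b) :
    a = 0 := by
  have h1 := (h ⟨1, 0, 0⟩).2
  have h2 := (h ⟨0, 1, 0⟩).2
  simp only [Hei.add_def, Hei.mul_def, Hei.mk.injEq] at h1 h2
  simp at h1 h2
  exact Hei.ext h2 (show a.y = 0 by linear_combination h1.2) h1.1

/-- Affine group. -/
@[ext] structure Aff (F : Type) [Field F] (H : Subgroup Fˣ) where
  u : H
  x : F

def affEquiv (F : Type) [Field F] (H : Subgroup Fˣ) : Aff F H ≃ H × F where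
  toFun a := (a.u, a.x)
  invFun a := ⟨a.1, a.2⟩
  left_inv _ := rfl
  right_inv _ := rfl

instance (F : Type) [Field F] (H : Subgroup Fˣ) : Group (Aff F H) where
  mul a b := ⟨a.u * b.u, a.x + ((a.u : Fˣ) : F) * b.x⟩
  one := ⟨1, 0⟩
  inv a := ⟨a.u⁻¹, -(((a.u⁻¹ : H) : Fˣ) : F) * a.x⟩
  mul_assoc a b c := by
    apply Aff.ext
    · exact mul_assoc _ _ _
    · change (a.x + ((a.u : Fˣ) : F) * b.x) + (((a.u * b.u : H) : Fˣ) : F) * c.x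
        = a.x + ((a.u : Fˣ) : F) * (b.x + ((b.u : Fˣ) : F) * c.x)
      push_cast; ring
  one_mul a := by
    apply Aff.ext
    · exact one_mul _
    · change 0 + (((1 : H) : Fˣ) : F) * a.x = a.x
      simp
  mul_one a := by
    apply Aff.ext
    · exact mul_one _
    · change a.x + ((a.u : Fˣ) : F) * 0 = a.x
      simp
  inv_mul_cancel a := by
    apply Aff.ext
    · exact inv_mul_cancel _
    · change -(((a.u⁻¹ : H) : Fˣ) : F) * a.x + (((a.u⁻¹ : H) : Fˣ) : F) * a.x = 0
      ring

lemma Aff.mul_def {F : Type} [Field F] {H : Subgroup Fˣ} (a b : Aff F H) :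
    a * b = ⟨a.u * b.u, a.x + ((a.u : Fˣ) : F) * b.x⟩ := rfl

lemma aff_center {F : Type} [Field F] {H : Subgroup Fˣ} (hH : H ≠ ⊥) (a : Aff F H)
    (h : ∀ b : Aff F H, a * b = b * a) : a = 1 := by
  obtain ⟨v, hv, hv1⟩ := (Subgroup.ne_bot_iff_exists_ne_one.1 hH) |> fun ⟨v, hv⟩ =>
    (⟨v.1, v.2, fun h => hv (Subtype.ext h)⟩ : ∃ v : Fˣ, v ∈ H ∧ v ≠ 1)
  have h1 := h ⟨1, 1⟩
  have h2 := h ⟨⟨v, hv⟩, 0⟩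
  simp only [Aff.mul_def, Aff.mk.injEq] at h1 h2
  have e1 := h1.2
  have e2 := h2.2
  simp at e1 e2
  have hu : ((a.u : Fˣ) : F) = 1 := by
    have : a.x + ((a.u : Fˣ) : F) = a.x + 1 := by rw [e1]; ring
    exact add_left_cancel this
  apply Aff.ext
  · exact Subtype.ext (Units.ext hu)
  · change a.x = 0
    have hv1' : (v : F) ≠ 1 := fun h => hv1 (Units.ext h)
    by_contra hx
    apply hv1'
    have : (v : F) * a.x = 1 * a.x := by rw [one_mul]; exact e2.symm
    exact mul_right_cancel₀ hx this

end SBHelp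

open SBHelp in
theorem every_skewBrace_is_annihilator_nilpotent_iff (n : ℕ) (hn : 0 < n) :
    (∀ (A : Type) [Fintype A] [SkewBrace A], Fintype.card A = n →
      IsAnnihilatorNilpotent A) ↔
    ((∀ p ∈ n.primeFactors, n.factorization p ≤ 2) ∧
      (∀ p ∈ n.primeFactors, ∀ q ∈ n.primeFactors, p ≠ q →
        ¬ p ∣ q ^ n.factorization q - 1)) := by
  constructor
  · intro H
    constructor
    · intro p hp
      by_contra hlt
      push Not at hlt
      have hpp := Nat.prime_of_mem_primeFactors hp
      have := Fact.mk hpp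
      have : Finite (Hei (ZMod p)) := Finite.of_equiv _ heiEquiv.symm
      have : Nontrivial (Hei (ZMod p)) := heiEquiv.nontrivial
      refine exists_bad hn (Hei (ZMod p)) hei_ann ?_ H
      rw [Nat.card_congr heiEquiv, Nat.card_prod, Nat.card_prod, Nat.card_zmod]
      have : p * (p * p) = p ^ 3 := by ring
      rw [this]
      exact (hpp.pow_dvd_iff_le_factorization hn.ne').2 hlt
    · intro p hp q hq hpq hdvd
      have hpp := Nat.prime_of_mem_primeFactors hp
      have hqp := Nat.prime_of_mem_primeFactors hq
      have := Fact.mk hpp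
      have := Fact.mk hqp
      have hα : n.factorization q ≠ 0 :=
        (hqp.factorization_pos_of_dvd hn.ne' (Nat.dvd_of_mem_primeFactors hq)).ne'
      set α := n.factorization q with hαd
      let F := GaloisField q α
      have hF : Nat.card F = q ^ α := GaloisField.card q α hα
      have : Finite F := Nat.finite_of_card_ne_zero (by rw [hF]; exact pow_ne_zero _ hqp.ne_zero)
      have hU : p ∣ Nat.card Fˣ := by rw [Nat.card_units, hF]; exact hdvd
      obtain ⟨u, hu⟩ := exists_prime_orderOf_dvd_card' p hU
      let K := Subgroup.zpowers u
      have hK : Nat.card K = p := by rw [Nat.card_zpowers, hu]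
      have hKb : K ≠ ⊥ := by
        intro h
        rw [h, Subgroup.card_bot] at hK
        exact hpp.one_lt.ne hK
      let e : TrivB (Aff F K) ≃ K × F := affEquiv F K
      have : Finite (TrivB (Aff F K)) := Finite.of_equiv _ e.symm
      have : Nontrivial (TrivB (Aff F K)) := e.nontrivial
      refine exists_bad hn (TrivB (Aff F K)) ?_ ?_ H
      · intro a h
        exact aff_center hKb a (fun b => (h b).1)
      · rw [Nat.card_congr e, Nat.card_prod, hK, hF]
        refine Nat.Coprime.mul_dvd_of_dvd_of_dvd ?_ (Nat.dvd_of_mem_primeFactors hp)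
          (Nat.ordProj_dvd n q)
        exact Nat.Coprime.pow_right _ ((Nat.coprime_primes hpp hqp).2 hpq)
  · rintro ⟨h1, h2⟩ A _ _ hA
    have hc : Nat.card A = n := by rw [Nat.card_eq_fintype_card, hA]
    have hc' : Nat.card (Multiplicative A) = n := hc
    apply comm_nilpotent
    · intro a b
      exact group_comm (G := Multiplicative A) (by rw [hc']; exact h1) (by rw [hc']; exact h2)
        (Multiplicative.ofAdd a) (Multiplicative.ofAdd b)
    · exact group_comm (G := A) (by rw [hc]; exact h1) (by rw [hc]; exact h2)
end
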